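/- Let G be a finite simple graph on the vertex set {x_1,…,x_n} (n ≥ 1) without isolated vertices, let c(G) denote the number of connected components of G, and let I(G) ⊂ S = K[x_1,…,x_n] be its edge ideal. Then there exists k_0 such that for all k ≥ k_0, v(I(G)^k) = 2k + (c(G) − 2). -/

import Mathlib

open MvPolynomial

noncomputable section

/-- The set of associated primes `Ass(L)` of the quotient by an ideal `L`. -/
def assOf {A : Type} [CommRing A] (L : Ideal A) : Set (Ideal A) :=
  associatedPrimes A (A ⧸ L)

/-- `𝔄` is the stable value `Ass^∞(L)` of `Ass(L^k)` for all large `k`. -/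
def IsStableAssValue {A : Type} [CommRing A] (L : Ideal A) (𝔄 : Set (Ideal A)) : Prop :=
  ∃ N : ℕ, ∀ k : ℕ, N ≤ k → assOf (L ^ k) = 𝔄

/-- `Ass^*(L) = ⋃_{k ≥ 1} Ass(L^k)`. -/
def assStar {A : Type} [CommRing A] (L : Ideal A) : Set (Ideal A) :=
  {p | ∃ k : ℕ, 1 ≤ k ∧ p ∈ assOf (L ^ k)}

/-- The local v-number `v_p(L)`: the least degree of a homogeneous `f` with `(L : f) = p`. -/
def vnum {σ K : Type} [Field K] (L p : Ideal (MvPolynomial σ K)) : ℕ :=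
  sInf {d : ℕ | ∃ f : MvPolynomial σ K, f.IsHomogeneous d ∧ L.colon (Ideal.span {f}) = p}

/-- The v-number `v(L) = min_{p ∈ Ass(L)} v_p(L)`. -/
def vnumber {σ K : Type} [Field K] (L : Ideal (MvPolynomial σ K)) : ℕ :=
  sInf {d : ℕ | ∃ p ∈ assOf L, ∃ f : MvPolynomial σ K,
    f.IsHomogeneous d ∧ L.colon (Ideal.span {f}) = p}

/-- The initial degree `α(L)`: the least `d` such that `L` contains a nonzero
homogeneous element of degree `d`. -/
def alphaDeg {σ K : Type} [Field K] (L : Ideal (MvPolynomial σ K)) : ℕ :=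
  sInf {d : ℕ | ∃ f ∈ L, f ≠ 0 ∧ MvPolynomial.IsHomogeneous f d}

/-- A graded (homogeneous) ideal: one containing all homogeneous components
of each of its elements. -/
def IsGradedIdeal {σ K : Type} [Field K] (I : Ideal (MvPolynomial σ K)) : Prop :=
  ∀ f ∈ I, ∀ d : ℕ, homogeneousComponent d f ∈ I

/-- A monomial ideal: an ideal generated by monomials. -/
def IsMonomialIdeal {σ K : Type} [Field K] (I : Ideal (MvPolynomial σ K)) : Prop :=
  ∃ G : Set (σ →₀ ℕ), I = Ideal.span ((fun a => (monomial a (1 : K))) '' G)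

/-- The exponent vector of the quadric attached to the edge underlying a dart. -/
def dartExp {V : Type*} {G : SimpleGraph V} (d : G.Dart) : V →₀ ℕ :=
  Finsupp.single d.fst 1 + Finsupp.single d.snd 1

/-- The exponent vector of a product of edges. -/
def edgeSum {V : Type*} {G : SimpleGraph V} : Multiset G.Dart →+ (V →₀ ℕ) :=
  Multiset.sumAddMonoidHom.comp (Multiset.mapAddMonoidHom dartExp)

/-- The connected component containing a dart. -/
def dartComp {V : Type*} {G : SimpleGraph V} (d : G.Dart) : G.ConnectedComponent :=
  G.connectedComponentMk d.fst

open scoped Classical in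
/-- The `w`-weighted degree of the part of an exponent vector supported on a component. -/
def compWeight {V : Type*} [Fintype V] (G : SimpleGraph V) (w : V → ℕ)
    (l : G.ConnectedComponent) : (V →₀ ℕ) →+ ℕ where
  toFun a := ∑ v with G.connectedComponentMk v = l, w v * a v
  map_zero' := by simp
  map_add' a b := by simp [mul_add, Finset.sum_add_distrib]

/-- The vertices `b` and `v` are joined, up to products of edges, by an odd walk. -/
def OddLinked {V : Type*} (G : SimpleGraph V) (b v : V) : Prop :=
  ∃ S T : Multiset G.Dart, T.card = S.card + 1 ∧
    Finsupp.single b 1 + Finsupp.single v 1 + edgeSum S = edgeSum T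

/-- The vertices `b` and `v` are joined, up to products of edges, by an even walk. -/
def EvenLinked {V : Type*} (G : SimpleGraph V) (b v : V) : Prop :=
  ∃ S T : Multiset G.Dart, T.card = S.card ∧
    Finsupp.single b 1 + edgeSum S = Finsupp.single v 1 + edgeSum T

section Combinatorics

variable {V : Type*} {G : SimpleGraph V}

lemma dartComp_eq_snd (d : G.Dart) : dartComp d = G.connectedComponentMk d.snd :=
  SimpleGraph.ConnectedComponent.sound d.adj.reachable

@[simp]
lemma edgeSum_singleton (d : G.Dart) : edgeSum {d} = dartExp d := by
  simp [edgeSum]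

lemma edgeSum_cons (d : G.Dart) (T : Multiset G.Dart) :
    edgeSum (d ::ₘ T) = dartExp d + edgeSum T := by
  simp [edgeSum]

lemma edgeSum_mono {S T : Multiset G.Dart} (h : S ≤ T) : edgeSum S ≤ edgeSum T := by
  obtain ⟨U, rfl⟩ := Multiset.le_iff_exists_add.mp h
  rw [map_add]
  exact le_self_add

lemma edgeSum_apply_eq_zero {T : Multiset G.Dart} {v : V}
    (h : ∀ d ∈ T, dartComp d ≠ G.connectedComponentMk v) : edgeSum T v = 0 := by
  classical
  induction T using Multiset.induction_on with
  | empty => simp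
  | cons d T ih =>
    have hd := h d (Multiset.mem_cons_self d T)
    have h₁ : d.fst ≠ v := fun h' => hd (by rw [dartComp, h'])
    have h₂ : d.snd ≠ v := fun h' => hd (by rw [dartComp_eq_snd, h'])
    rw [edgeSum_cons, Finsupp.add_apply, ih fun d' hd' => h d' (Multiset.mem_cons_of_mem hd')]
    simp [dartExp, h₁, h₂]

lemma OddLinked.evenLinked {b v w : V} (h : OddLinked G b v) (hvw : G.Adj v w) :
    EvenLinked G b w := by
  obtain ⟨S, T, hc, he⟩ := h
  refine ⟨⟨(v, w), hvw⟩ ::ₘ S, T, by simp [hc], ?_⟩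
  rw [edgeSum_cons, ← he, dartExp]
  abel

lemma EvenLinked.oddLinked {b v w : V} (h : EvenLinked G b v) (hvw : G.Adj v w) :
    OddLinked G b w := by
  obtain ⟨S, T, hc, he⟩ := h
  refine ⟨S, ⟨(v, w), hvw⟩ ::ₘ T, by simp [hc], ?_⟩
  rw [edgeSum_cons, add_right_comm, he, dartExp]
  abel

lemma EvenLinked.refl (b : V) : EvenLinked G b b := ⟨0, 0, rfl, rfl⟩

lemma oddLinked_or_evenLinked {b v : V} (h : G.Reachable b v) :
    OddLinked G b v ∨ EvenLinked G b v := by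
  rw [SimpleGraph.reachable_iff_reflTransGen] at h
  induction h with
  | refl => exact Or.inr (EvenLinked.refl b)
  | tail _ hvw ih => exact ih.symm.imp (·.oddLinked hvw) (·.evenLinked hvw)

variable [Fintype V]

lemma compWeight_mono (w : V → ℕ) (l : G.ConnectedComponent) {a b : V →₀ ℕ} (h : a ≤ b) :
    compWeight G w l a ≤ compWeight G w l b :=
  Finset.sum_le_sum fun v _ => Nat.mul_le_mul_left _ (h v)

open scoped Classical in
lemma compWeight_single (w : V → ℕ) (l : G.ConnectedComponent) (v : V) :
    compWeight G w l (Finsupp.single v 1) = if G.connectedComponentMk v = l then w v else 0 := by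
  simp [compWeight, Finsupp.single_apply, Finset.sum_ite_eq]

open scoped Classical in
lemma compWeight_dartExp {w : V → ℕ} (hw : ∀ u v, G.Adj u v → w u + w v = 2)
    (l : G.ConnectedComponent) (d : G.Dart) :
    compWeight G w l (dartExp d) = if dartComp d = l then 2 else 0 := by
  rw [dartExp, map_add, compWeight_single, compWeight_single, ← dartComp_eq_snd]
  change (if dartComp d = l then _ else _) + _ = _
  split_ifs
  · exact hw _ _ d.adj
  · rfl

open scoped Classical in
lemma compWeight_edgeSum {w : V → ℕ} (hw : ∀ u v, G.Adj u v → w u + w v = 2)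
    (l : G.ConnectedComponent) (T : Multiset G.Dart) :
    compWeight G w l (edgeSum T) = 2 * T.countP (dartComp · = l) := by
  induction T using Multiset.induction_on with
  | empty => simp
  | cons d T ih =>
    rw [edgeSum_cons, map_add, ih, compWeight_dartExp hw, Multiset.countP_cons]
    split_ifs <;> ring

open scoped Classical in
lemma sum_countP_dartComp (T : Multiset G.Dart) :
    ∑ l, T.countP (dartComp · = l) = T.card := by
  induction T using Multiset.induction_on with
  | empty => simp
  | cons d T ih => simp [Multiset.countP_cons, Finset.sum_add_distrib, ih]

open scoped Classical in
lemma sum_compWeight_one (a : V →₀ ℕ) :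
    ∑ l, compWeight G (fun _ => 1) l a = a.degree := by
  simp only [compWeight, AddMonoidHom.coe_mk, ZeroHom.coe_mk, one_mul]
  rw [Finsupp.degree_eq_sum, ← Finset.sum_fiberwise Finset.univ G.connectedComponentMk a]

lemma degree_edgeSum (T : Multiset G.Dart) : (edgeSum T).degree = 2 * T.card := by
  classical
  rw [← sum_compWeight_one (G := G), ← sum_countP_dartComp T, Finset.mul_sum]
  exact Finset.sum_congr rfl fun l _ => compWeight_edgeSum (fun _ _ _ => rfl) l T

open scoped Classical in
/-- Products of edges inside each component that divide a monomial can be chosen of maximal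
length. -/
lemma exists_maximal_edgeSum_le (a : V →₀ ℕ) (l : G.ConnectedComponent) :
    ∃ T : Multiset G.Dart, (∀ d ∈ T, dartComp d = l) ∧ edgeSum T ≤ a ∧
      ∀ U : Multiset G.Dart, (∀ d ∈ U, dartComp d = l) → edgeSum U ≤ a → U.card ≤ T.card := by
  let P : ℕ → Prop := fun s =>
    ∃ T : Multiset G.Dart, (∀ d ∈ T, dartComp d = l) ∧ edgeSum T ≤ a ∧ T.card = s
  have hbound : ∀ s, P s → s ≤ a.degree := by
    rintro _ ⟨T, -, hT, rfl⟩
    have h := Finsupp.degree_mono hT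
    rw [degree_edgeSum] at h
    omega
  obtain ⟨T, hT, hTa, hc⟩ := Nat.findGreatest_spec (P := P) (Nat.zero_le a.degree)
    ⟨0, by simp, by simp, rfl⟩
  refine ⟨T, hT, hTa, fun U hU hUa => ?_⟩
  rw [hc]
  exact Nat.le_findGreatest (hbound _ ⟨U, hU, hUa, rfl⟩) ⟨U, hU, hUa, rfl⟩

/-- A monomial outside the `k`-th power of the edge ideal, which is moved into that power by
some variable of each component, has degree at least `2k + c - 2`. -/
lemma le_degree_of_forall_component [Nonempty V] {k : ℕ} {a : V →₀ ℕ}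
    (ha : ∀ T : Multiset G.Dart, T.card = k → ¬ edgeSum T ≤ a)
    (hv : ∀ l : G.ConnectedComponent, ∃ v, G.connectedComponentMk v = l ∧
      ∃ T : Multiset G.Dart, T.card = k ∧ edgeSum T ≤ Finsupp.single v 1 + a) :
    2 * k + Nat.card G.ConnectedComponent ≤ a.degree + 2 := by
  classical
  choose T hTl hTa hTmax using exists_maximal_edgeSum_le (G := G) a
  set o : G.ConnectedComponent → ℕ := fun l => (T l).card with ho
  have hO : ∑ l, o l < k := by
    by_contra! hk
    have hle : edgeSum (∑ l, T l) ≤ a := by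
      intro v
      rw [map_sum, Finsupp.finsetSum_apply,
        Finset.sum_eq_single (G.connectedComponentMk v)]
      · exact hTa _ v
      · intro l _ hl
        exact edgeSum_apply_eq_zero fun d hd => by rwa [hTl l d hd]
      · simp
    rw [ho, ← Multiset.card_sum] at hk
    obtain ⟨U, hU, hUc⟩ : ∃ U ≤ ∑ l, T l, U.card = k := by
      obtain ⟨U, hU⟩ := Multiset.card_pos_iff_exists_mem.mp
        (Multiset.card_powersetCard k (∑ l, T l) ▸ Nat.choose_pos hk)
      exact ⟨U, Multiset.mem_powersetCard.mp hU⟩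
    exact ha U hUc ((edgeSum_mono hU).trans hle)
  have key : ∀ l, 2 * k + 2 * o l ≤ compWeight G (fun _ => 1) l a + 1 + 2 * ∑ l, o l := by
    intro l
    obtain ⟨v, rfl, E, hE, hEa⟩ := hv l
    have h₁ : ∀ j ∈ Finset.univ.erase (G.connectedComponentMk v),
        E.countP (dartComp · = j) ≤ o j := by
      intro j hj
      rw [Multiset.countP_eq_card_filter]
      refine hTmax j _ (fun d hd => (Multiset.mem_filter.mp hd).2) fun u => ?_
      by_cases hu : G.connectedComponentMk u = j
      · have huv : v ≠ u := by
          rintro rfl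
          exact (Finset.mem_erase.mp hj).1 hu.symm
        simpa [Finsupp.single_apply, huv] using
          (edgeSum_mono (Multiset.filter_le (dartComp · = j) E) u).trans (hEa u)
      · rw [edgeSum_apply_eq_zero fun d hd => by
          rw [(Multiset.mem_filter.mp hd).2]; exact Ne.symm hu]
        exact Nat.zero_le _
    have h₂ := Finset.sum_le_sum h₁
    have h₃ := Finset.add_sum_erase Finset.univ o (Finset.mem_univ (G.connectedComponentMk v))
    have h₄ := Finset.add_sum_erase Finset.univ (fun j => E.countP (dartComp · = j))
      (Finset.mem_univ (G.connectedComponentMk v))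
    rw [sum_countP_dartComp, hE] at h₄
    have h₅ := compWeight_mono (G := G) (fun _ => 1) (G.connectedComponentMk v) hEa
    rw [compWeight_edgeSum (fun _ _ _ => rfl), map_add, compWeight_single, if_pos rfl] at h₅
    omega
  have hsum := Finset.sum_le_sum fun l (_ : l ∈ Finset.univ) => key l
  simp only [Finset.sum_add_distrib, ← Finset.mul_sum, sum_compWeight_one, Finset.sum_const,
    Finset.card_univ, smul_eq_mul] at hsum
  rw [Nat.card_eq_fintype_card]
  have hc : 1 ≤ Fintype.card G.ConnectedComponent :=
    Fintype.card_pos_iff.mpr ⟨G.connectedComponentMk (Classical.arbitrary V)⟩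
  obtain ⟨s, hs⟩ := Nat.exists_eq_add_of_lt hO
  generalize Fintype.card G.ConnectedComponent = c at *
  generalize ∑ l, o l = O at *
  subst hs
  nlinarith [Nat.mul_le_mul_right s hc]

end Combinatorics

section Duality

variable {V : Type*} {G : SimpleGraph V}

/-- A chosen vertex of a connected component. -/
def compRep (l : G.ConnectedComponent) : V := Quot.out l

lemma connectedComponentMk_compRep (l : G.ConnectedComponent) :
    G.connectedComponentMk (compRep l) = l := Quot.out_eq l

/-- The vertices joined by an odd walk to the chosen representative of their component. -/
def oddVertices (G : SimpleGraph V) : Set V :=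
  {v | OddLinked G (compRep (G.connectedComponentMk v)) v}

open scoped Classical in
/-- A vertex weight that takes total value `2` on each edge, vanishes outside `oddVertices`, and
is at most `1` on the representatives of the components. -/
def linkWeight (G : SimpleGraph V) (v : V) : ℕ :=
  (if OddLinked G (compRep (G.connectedComponentMk v)) v then 1 else 0) +
    (if EvenLinked G (compRep (G.connectedComponentMk v)) v then 0 else 1)

lemma reachable_compRep (v : V) : G.Reachable (compRep (G.connectedComponentMk v)) v :=
  SimpleGraph.ConnectedComponent.exact (connectedComponentMk_compRep _)

lemma linkWeight_add_of_adj {u v : V} (h : G.Adj u v) :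
    linkWeight G u + linkWeight G v = 2 := by
  have hc : G.connectedComponentMk u = G.connectedComponentMk v :=
    SimpleGraph.ConnectedComponent.sound h.reachable
  have h₁ : OddLinked G (compRep (G.connectedComponentMk v)) u ↔
      EvenLinked G (compRep (G.connectedComponentMk v)) v := ⟨(·.evenLinked h), (·.oddLinked h.symm)⟩
  have h₂ : EvenLinked G (compRep (G.connectedComponentMk v)) u ↔
      OddLinked G (compRep (G.connectedComponentMk v)) v := ⟨(·.oddLinked h), (·.evenLinked h.symm)⟩
  unfold linkWeight
  rw [hc]
  split_ifs <;> tauto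

lemma linkWeight_eq_zero {v : V} (h : v ∉ oddVertices G) : linkWeight G v = 0 := by
  have h' : ¬ OddLinked G (compRep (G.connectedComponentMk v)) v := h
  have he := (oddLinked_or_evenLinked (reachable_compRep (G := G) v)).resolve_left h'
  simp [linkWeight, h', he]

lemma linkWeight_compRep_le (l : G.ConnectedComponent) : linkWeight G (compRep l) ≤ 1 := by
  unfold linkWeight
  rw [connectedComponentMk_compRep, if_pos (EvenLinked.refl _)]
  split_ifs <;> simp

variable [Fintype V]

open scoped Classical in
/-- The exponent vector of the product of the representatives of the components. -/
def repExp (G : SimpleGraph V) : V →₀ ℕ :=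
  ∑ l : G.ConnectedComponent, Finsupp.single (compRep l) 1

open scoped Classical in
lemma degree_repExp : (repExp G).degree = Nat.card G.ConnectedComponent := by
  simp [repExp, map_sum, Nat.card_eq_fintype_card]

lemma single_compRep_le_repExp (l : G.ConnectedComponent) :
    Finsupp.single (compRep l) 1 ≤ repExp G := by
  classical
  exact Finset.single_le_sum (f := fun l : G.ConnectedComponent => Finsupp.single (compRep l) 1)
    (fun _ _ => zero_le) (Finset.mem_univ l)

lemma compWeight_repExp_le (l : G.ConnectedComponent) :
    compWeight G (linkWeight G) l (repExp G) ≤ 1 := by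
  classical
  rw [repExp, map_sum]
  simp only [compWeight_single, connectedComponentMk_compRep, Finset.sum_ite_eq', Finset.mem_univ, if_true]
  exact linkWeight_compRep_le l

/-- Multiplying by variables outside `oddVertices` does not increase the order of the product of
the representatives with a product of edges. -/
lemma card_le_of_edgeSum_le {a : V →₀ ℕ} (ha : ∀ v ∈ oddVertices G, a v = 0)
    {S T : Multiset G.Dart} (h : edgeSum T ≤ a + (repExp G + edgeSum S)) :
    T.card ≤ S.card := by
  classical
  rw [← sum_countP_dartComp S, ← sum_countP_dartComp T]
  refine Finset.sum_le_sum fun l _ => ?_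
  have ha' : compWeight G (linkWeight G) l a = 0 := by
    refine Finset.sum_eq_zero fun v _ => ?_
    by_cases hv : v ∈ oddVertices G
    · rw [ha v hv, mul_zero]
    · rw [linkWeight_eq_zero hv, zero_mul]
  have hw := compWeight_mono (linkWeight G) l h
  rw [map_add, map_add, ha', compWeight_edgeSum fun _ _ => linkWeight_add_of_adj,
    compWeight_edgeSum fun _ _ => linkWeight_add_of_adj] at hw
  have := compWeight_repExp_le l
  omega

/-- For large `k`, some product of `k` edges times the representatives is multiplied into the
next power by every variable in `oddVertices`. -/
lemma exists_edgeSum_absorbing (d₀ : G.Dart) : ∃ k₀, ∀ k ≥ k₀, ∃ S : Multiset G.Dart,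
    S.card = k ∧ ∀ v ∈ oddVertices G, ∃ T : Multiset G.Dart, T.card = k + 1 ∧
      edgeSum T ≤ Finsupp.single v 1 + (repExp G + edgeSum S) := by
  classical
  have hex : ∀ v : V, ∃ S T : Multiset G.Dart, v ∈ oddVertices G → T.card = S.card + 1 ∧
      Finsupp.single (compRep (G.connectedComponentMk v)) 1 + Finsupp.single v 1 + edgeSum S =
        edgeSum T := by
    intro v
    by_cases hv : v ∈ oddVertices G
    · obtain ⟨S, T, h⟩ := hv
      exact ⟨S, T, fun _ => h⟩
    · exact ⟨0, 0, fun h => absurd h hv⟩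
  choose S T hST using hex
  refine ⟨(∑ v, S v).card, fun k hk => ?_⟩
  refine ⟨∑ v, S v + Multiset.replicate (k - (∑ v, S v).card) d₀, ?_, fun v hv => ?_⟩
  · rw [Multiset.card_add, Multiset.card_replicate, Nat.add_sub_cancel' hk]
  obtain ⟨hc, he⟩ := hST v hv
  obtain ⟨U, hU⟩ := Multiset.le_iff_exists_add.mp
    (Finset.single_le_sum (f := S) (fun _ _ => Multiset.zero_le _) (Finset.mem_univ v))
  refine ⟨T v + U + Multiset.replicate (k - (∑ v, S v).card) d₀, ?_, ?_⟩
  · have := congrArg Multiset.card hU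
    rw [Multiset.card_add] at this
    rw [Multiset.card_add, Multiset.card_add, Multiset.card_replicate, hc]
    omega
  · obtain ⟨r, hr⟩ := le_iff_exists_add.mp
      (single_compRep_le_repExp (G.connectedComponentMk v))
    rw [map_add, map_add, ← he, hr, hU, map_add, map_add, le_iff_exists_add]
    exact ⟨r, by abel⟩

end Duality

section Algebra

variable {σ K : Type} [Field K]

lemma isPrime_span_X_image (P : Set σ) :
    (Ideal.span (X '' P : Set (MvPolynomial σ K))).IsPrime := by
  classical
  let φ : MvPolynomial σ K →ₐ[K] MvPolynomial σ K := aeval fun i => if i ∈ P then 0 else X i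
  have hker : Ideal.span (X '' P : Set (MvPolynomial σ K)) = RingHom.ker φ := by
    apply le_antisymm
    · rw [Ideal.span_le]
      rintro _ ⟨i, hi, rfl⟩
      simp [φ, RingHom.mem_ker, hi]
    · intro g hg
      have hφ : (Ideal.Quotient.mkₐ K (Ideal.span (X '' P))).comp φ =
          Ideal.Quotient.mkₐ K (Ideal.span (X '' P : Set (MvPolynomial σ K))) := by
        ext i
        by_cases hi : i ∈ P
        · have : (Ideal.Quotient.mk (Ideal.span (X '' P : Set (MvPolynomial σ K)))) (X i) = 0 :=
            Ideal.Quotient.eq_zero_iff_mem.mpr (Ideal.subset_span ⟨i, hi, rfl⟩)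
          simp [φ, hi, this]
        · simp [φ, hi]
      have h := DFunLike.congr_fun hφ g
      rw [AlgHom.comp_apply, show φ g = 0 from hg, map_zero] at h
      exact Ideal.Quotient.eq_zero_iff_mem.mp h.symm
  rw [hker]
  exact RingHom.ker_isPrime _

lemma mem_assOf_of_colon_eq [Finite σ] {L p : Ideal (MvPolynomial σ K)} (hp : p.IsPrime)
    {f : MvPolynomial σ K} (h : L.colon (Ideal.span {f}) = p) : p ∈ assOf L := by
  refine isAssociatedPrime_iff.mpr ⟨hp, Ideal.Quotient.mk L f, ?_⟩
  ext g
  rw [← h, Submodule.mem_colon_singleton, ← Ideal.submodule_span_eq,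
    Submodule.mem_colon_span_singleton, Submodule.mem_bot]
  exact Ideal.Quotient.eq_zero_iff_mem.symm

lemma vnumber_eq_of_isPrime_colon [Finite σ] {L : Ideal (MvPolynomial σ K)} {d : ℕ}
    {f : MvPolynomial σ K} (hf : f.IsHomogeneous d) (hp : (L.colon (Ideal.span {f})).IsPrime)
    (hmin : ∀ (e : ℕ) (g : MvPolynomial σ K), g.IsHomogeneous e →
      (L.colon (Ideal.span {g})).IsPrime → d ≤ e) : vnumber L = d := by
  refine IsLeast.csInf_eq ⟨⟨_, mem_assOf_of_colon_eq hp rfl, f, hf, rfl⟩, ?_⟩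
  rintro e ⟨p, hpL, g, hg, hgp⟩
  exact hmin e g hg (by rw [hgp]; exact hpL.isPrime)

/-- The powers of an edge ideal are generated by the products of edges. -/
lemma edgeIdeal_pow_eq (G : SimpleGraph σ) (k : ℕ) :
    Ideal.span {f : MvPolynomial σ K | ∃ i j, G.Adj i j ∧ f = X i * X j} ^ k =
      Ideal.span ((fun a => monomial a (1 : K)) ''
        (edgeSum '' {T : Multiset G.Dart | T.card = k})) := by
  induction k with
  | zero => simp [Ideal.one_eq_top]
  | succ k ih =>
    rw [pow_succ, ih, Ideal.span_mul_span']
    congr 1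
    ext f
    constructor
    · rintro ⟨_, ⟨_, ⟨T, hT, rfl⟩, rfl⟩, _, ⟨i, j, hij, rfl⟩, rfl⟩
      refine ⟨_, ⟨⟨(i, j), hij⟩ ::ₘ T, by simpa using hT, rfl⟩, ?_⟩
      simp [edgeSum_cons, dartExp, X, monomial_mul, add_comm]
    · rintro ⟨_, ⟨T, hT, rfl⟩, rfl⟩
      obtain ⟨d, U, rfl⟩ : ∃ d U, T = d ::ₘ U := by
        obtain ⟨d, hd⟩ := Multiset.card_pos_iff_exists_mem.mp (by rw [hT]; exact k.succ_pos)
        exact ⟨d, Multiset.exists_cons_of_mem hd⟩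
      refine ⟨_, ⟨_, ⟨U, by simpa using hT, rfl⟩, rfl⟩, _, ⟨d.fst, d.snd, d.adj, rfl⟩, ?_⟩
      simp [edgeSum_cons, dartExp, X, monomial_mul, add_comm]

lemma mem_edgeIdeal_pow {G : SimpleGraph σ} {k : ℕ} {f : MvPolynomial σ K} :
    f ∈ Ideal.span {f : MvPolynomial σ K | ∃ i j, G.Adj i j ∧ f = X i * X j} ^ k ↔
      ∀ a ∈ f.support, ∃ T : Multiset G.Dart, T.card = k ∧ edgeSum T ≤ a := by
  rw [edgeIdeal_pow_eq, mem_ideal_span_monomial_image]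
  simp

variable [Fintype σ] {G : SimpleGraph σ} {k : ℕ}

lemma colon_repExp_mul_edgeSum {S : Multiset G.Dart} (hS : S.card = k)
    (hST : ∀ v ∈ oddVertices G, ∃ T : Multiset G.Dart, T.card = k + 1 ∧
      edgeSum T ≤ Finsupp.single v 1 + (repExp G + edgeSum S)) :
    (Ideal.span {f : MvPolynomial σ K | ∃ i j, G.Adj i j ∧ f = X i * X j} ^ (k + 1)).colon
      (Ideal.span {monomial (repExp G + edgeSum S) (1 : K)}) =
        Ideal.span (X '' oddVertices G) := by
  apply le_antisymm
  · intro g hg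
    rw [← Ideal.submodule_span_eq, Submodule.mem_colon_span_singleton, smul_eq_mul,
      mem_edgeIdeal_pow] at hg
    rw [mem_ideal_span_X_image]
    intro a ha
    by_contra! h
    obtain ⟨T, hT, hTa⟩ := hg (a + (repExp G + edgeSum S)) (by
      rw [mem_support_iff, coeff_mul_monomial, mul_one]
      exact mem_support_iff.mp ha)
    have := card_le_of_edgeSum_le h hTa
    omega
  · rw [Ideal.span_le]
    rintro _ ⟨v, hv, rfl⟩
    rw [SetLike.mem_coe, ← Ideal.submodule_span_eq, Submodule.mem_colon_span_singleton,
      smul_eq_mul, mem_edgeIdeal_pow, X, monomial_mul, one_mul]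
    intro a ha
    rw [Finset.mem_singleton.mp (support_monomial_subset ha)]
    exact hST v hv

/-- A homogeneous polynomial whose colon ideal is a prime has degree at least `2k + c - 2`. -/
lemma le_of_colon_edgeIdeal_pow_isPrime [Nonempty σ] (hiso : ∀ v, ∃ w, G.Adj v w)
    {f : MvPolynomial σ K} {d : ℕ} (hf : f.IsHomogeneous d)
    (hp : ((Ideal.span {f : MvPolynomial σ K | ∃ i j, G.Adj i j ∧ f = X i * X j} ^ k).colon
      (Ideal.span {f})).IsPrime) :
    2 * k + Nat.card G.ConnectedComponent ≤ d + 2 := by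
  set I := Ideal.span {f : MvPolynomial σ K | ∃ i j, G.Adj i j ∧ f = X i * X j} with hI
  have hfI : f ∉ I ^ k := fun h => hp.ne_top <| by
    rw [Ideal.eq_top_iff_one, ← Ideal.submodule_span_eq, Submodule.mem_colon_span_singleton,
      one_smul]
    exact h
  have hle : I ≤ (I ^ k).colon (Ideal.span {f}) := hp.le_of_pow_le Ideal.le_colon
  have hcomp : ∀ l : G.ConnectedComponent, ∃ v, G.connectedComponentMk v = l ∧
      (X v : MvPolynomial σ K) * f ∈ I ^ k := by
    intro l
    obtain ⟨w, hw⟩ := hiso (compRep l)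
    have hmem := hle (Ideal.subset_span ⟨compRep l, w, hw, rfl⟩)
    rcases hp.mem_or_mem hmem with h | h <;>
      rw [← Ideal.submodule_span_eq, Submodule.mem_colon_span_singleton, smul_eq_mul] at h
    · exact ⟨_, connectedComponentMk_compRep l, h⟩
    · refine ⟨w, ?_, h⟩
      rw [← connectedComponentMk_compRep l]
      exact (SimpleGraph.ConnectedComponent.sound hw.reachable).symm
  rw [mem_edgeIdeal_pow] at hfI
  push Not at hfI
  obtain ⟨a, ha, haT⟩ := hfI
  have hdeg : a.degree = d := by
    by_contra h
    exact mem_support_iff.mp ha (hf.coeff_eq_zero h)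
  rw [← hdeg]
  refine le_degree_of_forall_component haT fun l => ?_
  obtain ⟨v, hv, hvf⟩ := hcomp l
  refine ⟨v, hv, mem_edgeIdeal_pow.mp hvf _ ?_⟩
  rw [mem_support_iff, coeff_X_mul]
  exact mem_support_iff.mp ha

end Algebra

/-- Corollary 5.4: let `G` be a finite simple graph on `{x_1,…,x_n}`
(`n ≥ 1`) without isolated vertices, with `c(G)` connected components, and let `I(G)` be its
edge ideal.  Then `v(I(G)^k) = 2k + (c(G) − 2)` for all `k ≫ 0`. -/
theorem stmt12 {K : Type} [Field K] {n : ℕ} (hn : 1 ≤ n)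
    (G : SimpleGraph (Fin n)) (hiso : ∀ v, ∃ w, G.Adj v w)
    (IG : Ideal (MvPolynomial (Fin n) K))
    (hIG : IG = Ideal.span
      {f : MvPolynomial (Fin n) K | ∃ i j : Fin n, G.Adj i j ∧ f = X i * X j}) :
    ∃ k₀ : ℕ, ∀ k : ℕ, k₀ ≤ k →
      (vnumber (IG ^ k) : ℤ) = 2 * k + ((Nat.card G.ConnectedComponent : ℤ) - 2) := by
  subst hIG
  have : Nonempty (Fin n) := ⟨⟨0, hn⟩⟩
  obtain ⟨w, hw⟩ := hiso ⟨0, hn⟩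
  obtain ⟨k₀, hk₀⟩ := exists_edgeSum_absorbing ⟨(_, w), hw⟩
  refine ⟨k₀ + 1, fun k hk => ?_⟩
  obtain ⟨k, rfl⟩ : ∃ m, k = m + 1 := ⟨k - 1, by omega⟩
  obtain ⟨S, hS, hST⟩ := hk₀ k (by omega)
  have hcolon := colon_repExp_mul_edgeSum (K := K) hS hST
  have hdeg : (repExp G + edgeSum S).degree = 2 * k + Nat.card G.ConnectedComponent := by
    rw [map_add, degree_repExp, degree_edgeSum, hS, add_comm]
  rw [vnumber_eq_of_isPrime_colon (isHomogeneous_monomial 1 hdeg)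
    (by rw [hcolon]; exact isPrime_span_X_image _) fun e g hg hp => by
      have := le_of_colon_edgeIdeal_pow_isPrime hiso hg hp
      omega]
  push_cast
  ring
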